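/- arXiv:2508.10438 — 2 statements merged into one kernel-verified Lean document; each statement's English description precedes it below -/
import Mathlib

section
/- Let a transition system with valuation be given and let φ₁, …, φ_k (k ≥ 1) be formulas. Then the system globally satisfies the conjunction φ₁ ∧ ⋯ ∧ φ_k if and only if it globally satisfies φ_i for every 1 ≤ i ≤ k. -/
/-- Formulas of a finite-trace temporal logic over a type `α` of atoms. -/
inductive Formula (α : Type*) : Type _ where
  | atom : α → Formula α
  | and : Formula α → Formula α → Formula α
  | neg : Formula α → Formula α
  | next : Formula α → Formula α

namespace Formula

/-- Disjunction `φ₁ ∨ φ₂` abbreviates `¬(¬φ₁ ∧ ¬φ₂)`. -/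
def or {α : Type*} (f g : Formula α) : Formula α := neg (and (neg f) (neg g))

/-- The degree of a formula: maximal nesting depth of the weak-next operator. -/
def deg {α : Type*} : Formula α → ℕ
  | atom _ => 0
  | and f g => max f.deg g.deg
  | neg f => f.deg
  | next f => f.deg + 1

end Formula

/-- Satisfaction of a formula on the nonempty finite sequence `(σ i, …, σ m)`:
`Sat v σ m φ i` means `φ` holds on `(σ i, …, σ m)`. -/
def Sat {S α : Type*} (v : S → α → Prop) (σ : ℕ → S) (m : ℕ) : Formula α → ℕ → Prop
  | .atom a, i => v (σ i) a
  | .and f g, i => Sat v σ m f i ∧ Sat v σ m g i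
  | .neg f, i => ¬ Sat v σ m f i
  | .next f, i => i = m ∨ (i < m ∧ Sat v σ m f (i + 1))

/-- `nest(φ, ∨, n)`. -/
def nestOr {α : Type*} (φ : Formula α) : ℕ → Formula α
  | 0 => φ
  | n + 1 => φ.or (Formula.next (nestOr φ n))

/-- `nest(φ, ∧, n)`. -/
def nestAnd {α : Type*} (φ : Formula α) : ℕ → Formula α
  | 0 => φ
  | n + 1 => Formula.and φ (Formula.next (nestAnd φ n))

/-- A transition system: states, step relation, terminal states, initial state. -/
structure TransSys (S : Type*) where
  R : S → S → Prop
  T : Set S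
  init : S

/-- The set of blocked states: states with no successor. -/
def TransSys.B {S : Type*} (ts : TransSys S) : Set S := {s | ∀ s', ¬ ts.R s s'}

/-- `(σ 0, …, σ m)` is a valid sequence. -/
def TransSys.Valid {S : Type*} (ts : TransSys S) (σ : ℕ → S) (m : ℕ) : Prop :=
  σ 0 = ts.init ∧ (∀ i < m, ts.R (σ i) (σ (i + 1))) ∧ (∀ i < m, σ i ∉ ts.T)

/-- `(σ 0, …, σ m)` is an `n`-max valid sequence. -/
def TransSys.NMax {S : Type*} (ts : TransSys S) (n : ℕ) (σ : ℕ → S) (m : ℕ) : Prop :=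
  ts.Valid σ m ∧ (m = n ∨ (m < n ∧ σ m ∈ ts.T ∪ ts.B))

/-- The system globally satisfies `φ`: every `deg(φ)`-max valid sequence satisfies `φ`. -/
def GlobSat {S α : Type*} (ts : TransSys S) (v : S → α → Prop) (φ : Formula α) : Prop :=
  ∀ σ m, ts.NMax φ.deg σ m → Sat v σ m φ 0

/-- The conjunction φ₁ ∧ ⋯ ∧ φ_k of the nonempty list φ :: l of formulas. -/
def bigAnd {α : Type*} : Formula α → List (Formula α) → Formula α
  | φ, [] => φ
  | φ, ψ :: l => Formula.and φ (bigAnd ψ l)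

/-!
A formula of degree `d` only looks at the first `d + 1` states of a sequence, so truncating the
sequence to `(σ 0, …, σ d)` does not change its truth value. For `d ≤ n` the `d`-max valid sequences
are exactly the truncations of the `n`-max ones: truncation preserves maximality, and a `d`-max
sequence can be prolonged step by step until it has `n` steps or gets stuck. Hence global
satisfaction of a formula may be tested on `n`-max sequences for any `n` at least its degree; for
the members of a conjunction, take `n` to be the degree of the conjunction.
-/

section

variable {S α : Type*}

theorem sat_congr {v : S → α → Prop} {σ τ : ℕ → S} {m i : ℕ} {φ : Formula α} (him : i ≤ m)
    (hστ : Set.EqOn σ τ (Set.Icc i m)) : Sat v σ m φ i ↔ Sat v τ m φ i := by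
  induction φ generalizing i with
  | atom a => simp only [Sat, hστ (Set.left_mem_Icc.mpr him)]
  | and f g ihf ihg => exact and_congr (ihf him hστ) (ihg him hστ)
  | neg f ih => exact not_congr (ih him hστ)
  | next f ih =>
    exact or_congr_right <| and_congr_right fun hlt ↦
      ih hlt (hστ.mono (Set.Icc_subset_Icc_left i.le_succ))

theorem sat_min_iff {v : S → α → Prop} {σ : ℕ → S} {n m i : ℕ} {φ : Formula α}
    (hn : i + φ.deg ≤ n) : Sat v σ (min n m) φ i ↔ Sat v σ m φ i := by
  induction φ generalizing i with
  | atom a => exact Iff.rfl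
  | and f g ihf ihg =>
    rw [Formula.deg] at hn
    exact and_congr (ihf (by omega)) (ihg (by omega))
  | neg f ih => exact not_congr (ih hn)
  | next f ih =>
    rw [Formula.deg] at hn
    have heq : i = min n m ↔ i = m := by omega
    have hlt : i < min n m ↔ i < m := by omega
    exact or_congr heq (and_congr hlt (ih (by omega)))

namespace TransSys

variable {ts : TransSys S} {σ τ : ℕ → S} {k m n : ℕ}

theorem Valid.of_le (h : ts.Valid σ n) (hmn : m ≤ n) : ts.Valid σ m :=
  ⟨h.1, fun i hi ↦ h.2.1 i (hi.trans_le hmn), fun i hi ↦ h.2.2 i (hi.trans_le hmn)⟩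

theorem Valid.congr (h : ts.Valid σ m) (hστ : Set.EqOn σ τ (Set.Iic m)) : ts.Valid τ m := by
  obtain ⟨hstart, hstep, hnonterminal⟩ := h
  refine ⟨hστ m.zero_le ▸ hstart, fun i hi ↦ ?_, fun i hi ↦ hστ hi.le ▸ hnonterminal i hi⟩
  rw [← hστ hi.le, ← hστ (Nat.succ_le_of_lt hi)]
  exact hstep i hi

theorem Valid.succ (h : ts.Valid σ m) (hR : ts.R (σ m) (σ (m + 1))) (hT : σ m ∉ ts.T) :
    ts.Valid σ (m + 1) :=
  ⟨h.1, Nat.forall_lt_succ_right.mpr ⟨h.2.1, hR⟩, Nat.forall_lt_succ_right.mpr ⟨h.2.2, hT⟩⟩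

theorem Valid.exists_succ (h : ts.Valid σ m) (hm : σ m ∉ ts.T ∪ ts.B) :
    ∃ τ, Set.EqOn σ τ (Set.Iic m) ∧ ts.Valid τ (m + 1) := by
  obtain ⟨hT, hB⟩ := not_or.mp hm
  obtain ⟨s, hs⟩ : ∃ s, ts.R (σ m) s := not_forall_not.mp hB
  have hστ : Set.EqOn σ (Function.update σ (m + 1) s) (Set.Iic m) := fun i hi ↦
    (Function.update_of_ne (Nat.lt_succ_of_le hi).ne s σ).symm
  refine ⟨_, hστ, (h.congr hστ).succ ?_ ?_⟩
  · rwa [← hστ Set.self_mem_Iic, Function.update_self]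
  · rwa [← hστ Set.self_mem_Iic]

theorem Valid.exists_nMax (h : ts.Valid σ m) (hmn : m ≤ n) :
    ∃ τ k, m ≤ k ∧ Set.EqOn σ τ (Set.Iic m) ∧ ts.NMax n τ k := by
  induction hmn using Nat.decreasingInduction generalizing σ with
  | self => exact ⟨σ, n, le_rfl, Set.eqOn_refl _ _, h, .inl rfl⟩
  | of_succ m hmn ih =>
    by_cases hm : σ m ∈ ts.T ∪ ts.B
    · exact ⟨σ, m, le_rfl, Set.eqOn_refl _ _, h, .inr ⟨hmn, hm⟩⟩
    · obtain ⟨ρ, hσρ, hρ⟩ := h.exists_succ hm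
      obtain ⟨τ, k, hmk, hρτ, hτ⟩ := ih hρ
      have hIic : Set.Iic m ⊆ Set.Iic (m + 1) := Set.Iic_subset_Iic.mpr m.le_succ
      exact ⟨τ, k, m.le_succ.trans hmk, hσρ.trans (hρτ.mono hIic), hτ⟩

theorem NMax.truncate (h : ts.NMax n σ k) (hmn : m ≤ n) : ts.NMax m σ (min m k) := by
  refine ⟨h.1.of_le (min_le_right m k), ?_⟩
  rcases le_or_gt m k with hmk | hkm
  · exact .inl (min_eq_left hmk)
  · rw [min_eq_right hkm.le]
    exact .inr ⟨hkm, (h.2.resolve_left (hkm.trans_le hmn).ne).2⟩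

theorem NMax.exists_prolongation (h : ts.NMax m σ k) (hmn : m ≤ n) :
    ∃ τ l, k = min m l ∧ Set.EqOn σ τ (Set.Iic k) ∧ ts.NMax n τ l := by
  obtain ⟨hvalid, rfl | ⟨hkm, hmem⟩⟩ := h
  · obtain ⟨τ, l, hkl, hστ, hτ⟩ := hvalid.exists_nMax hmn
    exact ⟨τ, l, (min_eq_left hkl).symm, hστ, hτ⟩
  · exact ⟨σ, k, (min_eq_right hkm.le).symm, Set.eqOn_refl _ _, hvalid,
      .inr ⟨hkm.trans_le hmn, hmem⟩⟩

end TransSys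

theorem globSat_iff_of_deg_le {ts : TransSys S} {v : S → α → Prop} {φ : Formula α} {n : ℕ}
    (hn : φ.deg ≤ n) : GlobSat ts v φ ↔ ∀ σ m, ts.NMax n σ m → Sat v σ m φ 0 := by
  have sat_min {σ : ℕ → S} {m : ℕ} : Sat v σ (min φ.deg m) φ 0 ↔ Sat v σ m φ 0 :=
    sat_min_iff (Nat.zero_add _).le
  constructor
  · intro h σ m hm
    exact sat_min.mp (h σ _ (hm.truncate hn))
  · intro h σ m hm
    obtain ⟨τ, l, rfl, hστ, hτ⟩ := hm.exists_prolongation hn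
    exact (sat_congr (Nat.zero_le _) (hστ.mono Set.Icc_subset_Iic_self)).mpr
      (sat_min.mpr (h τ l hτ))

theorem globSat_and {ts : TransSys S} {v : S → α → Prop} {f g : Formula α} :
    GlobSat ts v (f.and g) ↔ GlobSat ts v f ∧ GlobSat ts v g := by
  rw [globSat_iff_of_deg_le (le_max_left f.deg g.deg),
    globSat_iff_of_deg_le (le_max_right f.deg g.deg)]
  simp only [GlobSat, Formula.deg, Sat, forall_and]

end

/-- the system globally satisfies the conjunction φ₁ ∧ ⋯ ∧ φ_k (k ≥ 1)
iff it globally satisfies each φ_i. -/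
theorem stmt_6 {S α : Type*} (ts : TransSys S) (v : S → α → Prop)
    (φ : Formula α) (l : List (Formula α)) :
    GlobSat ts v (bigAnd φ l) ↔ ∀ ψ ∈ φ :: l, GlobSat ts v ψ := by
  induction l generalizing φ with
  | nil => simp only [bigAnd, List.forall_mem_singleton]
  | cons ψ l ih => rw [bigAnd, globSat_and, ih ψ, List.forall_mem_cons (a := φ)]
end

section
/- Let a transition system with valuation v be given, and let 'terminal' be an atom such that v s terminal holds if and only if s ∈ T, for every state s. Then for every n ∈ ℕ, the system globally satisfies nest(terminal, ∨, n) if and only if every valid sequence (S_0, …, S_n) of exactly n steps ends in a terminal state, i.e. S_n ∈ T. -/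
/-!
The weak next operator holds at the last state of a sequence, so `nestOr φ n` holds automatically on
a sequence with fewer than `n` steps; on any other sequence it says that `φ` holds at one of the
first `n + 1` positions. Since a valid sequence stops at its first terminal state, a valid sequence
of `n` steps meets a terminal state in these positions exactly when its last state is terminal.
-/

namespace Formula

variable {α : Type*}

theorem deg_or (φ ψ : Formula α) : (φ.or ψ).deg = max φ.deg ψ.deg := rfl

theorem deg_nestOr (φ : Formula α) (n : ℕ) : (nestOr φ n).deg = φ.deg + n := by
  induction n with
  | zero => rfl
  | succ n ih =>
    rw [nestOr, deg_or, deg, ih, max_eq_right (by lia), Nat.add_assoc]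

end Formula

section Sat

variable {S α : Type*} {v : S → α → Prop} {σ : ℕ → S} {m i n : ℕ} {φ ψ : Formula α}

theorem sat_or_iff : Sat v σ m (φ.or ψ) i ↔ Sat v σ m φ i ∨ Sat v σ m ψ i := by
  simp only [Formula.or, Sat, not_and_or, not_not]

theorem sat_next_iff (hi : i ≤ m) :
    Sat v σ m φ.next i ↔ (i < m → Sat v σ m φ (i + 1)) := by
  rcases hi.eq_or_lt with rfl | hlt
  · simp only [Sat, true_or, lt_irrefl, false_imp_iff]
  · simp only [Sat, hlt.ne, hlt, false_or, true_and, forall_const]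

theorem sat_nestOr_succ_iff (hi : i ≤ m) :
    Sat v σ m (nestOr φ (n + 1)) i ↔
      Sat v σ m φ i ∨ (i < m → Sat v σ m (nestOr φ n) (i + 1)) := by
  rw [nestOr, sat_or_iff, sat_next_iff hi]

theorem sat_nestOr_of_lt_add (hi : i ≤ m) (hm : m < i + n) : Sat v σ m (nestOr φ n) i := by
  induction n generalizing i with
  | zero => exact absurd hm hi.not_gt
  | succ n ih => exact (sat_nestOr_succ_iff hi).2 (Or.inr fun hlt => ih hlt (by lia))

theorem sat_nestOr_iff_exists (hm : i + n ≤ m) :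
    Sat v σ m (nestOr φ n) i ↔ ∃ k < n + 1, Sat v σ m φ (i + k) := by
  induction n generalizing i with
  | zero => simp only [nestOr, Nat.zero_add, Nat.lt_one_iff, exists_eq_left, Nat.add_zero]
  | succ n ih =>
    have hlt : i < m := by lia
    calc Sat v σ m (nestOr φ (n + 1)) i
      _ ↔ Sat v σ m φ i ∨ Sat v σ m (nestOr φ n) (i + 1) := by
        rw [sat_nestOr_succ_iff hlt.le, imp_iff_right hlt]
      _ ↔ Sat v σ m φ i ∨ ∃ k < n + 1, Sat v σ m φ (i + (k + 1)) := by
        rw [ih (by lia)]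
        simp only [Nat.add_assoc, Nat.add_comm 1]
      _ ↔ ∃ k < n + 1 + 1, Sat v σ m φ (i + k) :=
        (Nat.exists_lt_succ_left (p := fun k => Sat v σ m φ (i + k))).symm

end Sat

namespace TransSys

variable {S : Type*} {ts : TransSys S} {σ : ℕ → S} {m n : ℕ}

theorem Valid.exists_mem_T_iff (hσ : ts.Valid σ m) :
    (∃ k < m + 1, σ k ∈ ts.T) ↔ σ m ∈ ts.T := by
  rw [Nat.exists_lt_succ_right]
  exact or_iff_right fun ⟨k, hk, hT⟩ => hσ.2.2 k hk hT

theorem Valid.nMax (hσ : ts.Valid σ n) : ts.NMax n σ n := ⟨hσ, Or.inl rfl⟩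

theorem NMax.eq_of_le (hσ : ts.NMax n σ m) (hle : n ≤ m) : m = n :=
  hσ.2.resolve_right fun h => hle.not_gt h.1

end TransSys

section GlobSat

variable {S α : Type*} {ts : TransSys S} {v : S → α → Prop} {φ : Formula α} {n : ℕ}

theorem globSat_nestOr_iff :
    GlobSat ts v (nestOr φ n) ↔
      ∀ σ m, ts.NMax (φ.deg + n) σ m → n ≤ m → ∃ k < n + 1, Sat v σ m φ k := by
  unfold GlobSat
  rw [Formula.deg_nestOr]
  refine forall₃_congr fun σ m _ => ?_
  rcases lt_or_ge m n with hlt | hle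
  · exact iff_of_true (sat_nestOr_of_lt_add (Nat.zero_le m) (by lia)) fun h => absurd h hlt.not_ge
  · rw [sat_nestOr_iff_exists (by lia), imp_iff_right hle]
    simp only [Nat.zero_add]

theorem globSat_nestOr_iff_of_deg_eq_zero (hφ : φ.deg = 0) :
    GlobSat ts v (nestOr φ n) ↔ ∀ σ, ts.Valid σ n → ∃ k < n + 1, Sat v σ n φ k := by
  rw [globSat_nestOr_iff, hφ, Nat.zero_add]
  constructor
  · exact fun h σ hσ => h σ n hσ.nMax le_rfl
  · intro h σ m hσ hle
    obtain rfl := hσ.eq_of_le hle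
    exact h σ hσ.1

end GlobSat

/-- the system globally satisfies nest(terminal, ∨, n) iff every valid
sequence of exactly n steps ends in a terminal state. -/
theorem stmt_10 {S α : Type*} (ts : TransSys S) (v : S → α → Prop) (terminal : α)
    (hv : ∀ s, v s terminal ↔ s ∈ ts.T) (n : ℕ) :
    GlobSat ts v (nestOr (Formula.atom terminal) n) ↔
      ∀ σ : ℕ → S, ts.Valid σ n → σ n ∈ ts.T := by
  rw [globSat_nestOr_iff_of_deg_eq_zero rfl]
  refine forall₂_congr fun σ hσ => ?_
  simp only [Sat, hv]
  exact hσ.exists_mem_T_iff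
end
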